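/- For a ≥ b ≥ c > 0, the surface area of the hemiellipsoid z = c√(1 − x²/a² − y²/b²) (the upper half of the ellipsoid x²/a² + y²/b² + z²/c² = 1) equals (2π b² c²/a²) · F₁(2; 1/2, 1/2; 3/2; 1 − b²/a², 1 − c²/a²). -/

import Mathlib

open Real MeasureTheory

/-- Pochhammer symbol (rising factorial) on the reals. -/
noncomputable def poch (a : ℝ) (n : ℕ) : ℝ := (ascPochhammer ℝ n).eval a

/-- Appell's first hypergeometric function `F₁(a; b, c; d; x, y)`. -/
noncomputable def appellF1 (a b c d x y : ℝ) : ℝ :=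
  ∑' p : ℕ × ℕ, poch a (p.1 + p.2) * poch b p.1 * poch c p.2 *
      x ^ p.1 * y ^ p.2 /
    (poch d (p.1 + p.2) * Nat.factorial p.1 * Nat.factorial p.2)


lemma poch_zero' (a : ℝ) : poch a 0 = 1 := by simp [poch]
lemma poch_succ' (a : ℝ) (n : ℕ) : poch a (n+1) = poch a n * (a + n) := by
  simp [poch, ascPochhammer_succ_eval]
lemma poch_pos' (a : ℝ) (ha : 0 < a) (n : ℕ) : 0 < poch a n := by
  simpa [poch] using ascPochhammer_pos n a ha

lemma poch_two (n : ℕ) : poch 2 n = (n+1).factorial := by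
  induction n with
  | zero => simp [poch_zero']
  | succ n ih => rw [poch_succ', ih, Nat.factorial_succ (n+1)]; push_cast; ring

lemma int_t (n : ℕ) : ∫ t in (-1:ℝ)..1, (1 - t^2)^n = 2 * n.factorial / poch (3/2) n := by
  induction n with
  | zero => simp [poch_zero']; norm_num
  | succ n ih =>
    have h : ∫ t in (-1:ℝ)..1, ((2*n+3) * (1-t^2)^(n+1) - (2*n+2) * (1-t^2)^n) = 0 := by
      have := intervalIntegral.integral_eq_sub_of_hasDerivAt (a := (-1:ℝ)) (b := 1)
        (f := fun t => t * (1-t^2)^(n+1))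
        (f' := fun t => (2*n+3) * (1-t^2)^(n+1) - (2*n+2) * (1-t^2)^n) (by
          intro t _
          have h1 := (hasDerivAt_id t).mul ((((hasDerivAt_id t).pow 2).const_sub 1).pow (n+1))
          refine HasDerivAt.congr_deriv h1 ?_
          simp
          ring) (by apply Continuous.intervalIntegrable; fun_prop)
      rw [this]; norm_num
    rw [intervalIntegral.integral_sub (by apply Continuous.intervalIntegrable; fun_prop)
      (by apply Continuous.intervalIntegrable; fun_prop),
      intervalIntegral.integral_const_mul, intervalIntegral.integral_const_mul, ih] at h
    have hp := poch_pos' (3/2) (by norm_num) n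
    rw [poch_succ', Nat.factorial_succ]
    have hn : (0:ℝ) < 2*n+3 := by positivity
    have hn' : (0:ℝ) < 3/2+n := by positivity
    push_cast
    generalize (∫ t in (-1:ℝ)..1, (1 - t^2)^(n+1)) = I at *
    field_simp at h ⊢
    linear_combination h

lemma int_phi_rec (m n : ℕ) :
    (∫ p in (0:ℝ)..π, cos p ^ (2*(m+1)) * sin p ^ (2*n)) =
      (1/2 + m) / (m+n+1) * ∫ p in (0:ℝ)..π, cos p ^ (2*m) * sin p ^ (2*n) ∧
    (∫ p in (0:ℝ)..π, cos p ^ (2*m) * sin p ^ (2*(n+1))) =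
      (1/2 + n) / (m+n+1) * ∫ p in (0:ℝ)..π, cos p ^ (2*m) * sin p ^ (2*n) := by
  have h : ∫ p in (0:ℝ)..π, ((2*n+1) * (cos p ^ (2*(m+1)) * sin p ^ (2*n))
      - (2*m+1) * (cos p ^ (2*m) * sin p ^ (2*(n+1)))) = 0 := by
    have := intervalIntegral.integral_eq_sub_of_hasDerivAt (a := (0:ℝ)) (b := π)
        (f := fun p => cos p ^ (2*m+1) * sin p ^ (2*n+1))
        (f' := fun p => ((2*n+1) * (cos p ^ (2*(m+1)) * sin p ^ (2*n))
      - (2*m+1) * (cos p ^ (2*m) * sin p ^ (2*(n+1))))) (by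
          intro t _
          have h1 := ((hasDerivAt_cos t).pow (2*m+1)).mul ((hasDerivAt_sin t).pow (2*n+1))
          refine HasDerivAt.congr_deriv h1 ?_
          simp
          ring) (by apply Continuous.intervalIntegrable; fun_prop)
    rw [this]; simp
  have h2 : (∫ p in (0:ℝ)..π, cos p ^ (2*(m+1)) * sin p ^ (2*n)) +
     (∫ p in (0:ℝ)..π, cos p ^ (2*m) * sin p ^ (2*(n+1))) =
     ∫ p in (0:ℝ)..π, cos p ^ (2*m) * sin p ^ (2*n) := by
    rw [← intervalIntegral.integral_add (by apply Continuous.intervalIntegrable; fun_prop)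
      (by apply Continuous.intervalIntegrable; fun_prop)]
    congr 1; ext p
    have := sin_sq_add_cos_sq p
    linear_combination (cos p ^ (2*m) * sin p ^ (2*n)) * this
  rw [intervalIntegral.integral_sub (by apply Continuous.intervalIntegrable; fun_prop)
      (by apply Continuous.intervalIntegrable; fun_prop),
      intervalIntegral.integral_const_mul, intervalIntegral.integral_const_mul] at h
  rw [← h2]
  have hn : (0:ℝ) < m+n+1 := by positivity
  constructor
  · field_simp
    linear_combination h
  · field_simp
    linear_combination -h

lemma int_phi (m n : ℕ) : (∫ p in (0:ℝ)..π, cos p ^ (2*m) * sin p ^ (2*n)) =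
    π * poch (1/2) m * poch (1/2) n / (m+n).factorial := by
  induction m with
  | zero =>
    induction n with
    | zero => simp [poch_zero']
    | succ n ih =>
      rw [(int_phi_rec 0 n).2, ih, poch_succ', poch_zero', ← add_assoc, Nat.factorial_succ]
      push_cast
      field_simp
  | succ m ih =>
    rw [(int_phi_rec m n).1, ih, poch_succ', show m + 1 + n = (m + n) + 1 by ring, Nat.factorial_succ]
    push_cast
    field_simp

lemma hasSum_pt (X Y : ℝ) (hX : 0 ≤ X) (hY : 0 ≤ Y) (h : X + Y < 1) :
    HasSum (fun p : ℕ × ℕ => ((p.1+p.2+1 : ℕ) : ℝ) * ((p.1+p.2).choose p.1) * X^p.1 * Y^p.2)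
      (1 / (1 - (X+Y))^2) := by
  have h1 : HasSum (fun N : ℕ => ((N+1 : ℕ) : ℝ) * (X+Y)^N) (1 / (1 - (X+Y))^2) := by
    have := hasSum_choose_mul_geometric_of_norm_lt_one 1 (r := X+Y)
      (by rw [Real.norm_of_nonneg (by positivity)]; exact h)
    simpa using this
  rw [← Finset.HasAntidiagonal.sigmaAntidiagonalEquivProd.hasSum_iff]
  have h2 : ∀ N : ℕ, HasSum (fun q : Finset.HasAntidiagonal.antidiagonal N =>
      ((fun p : ℕ × ℕ => ((p.1+p.2+1 : ℕ) : ℝ) * ((p.1+p.2).choose p.1) * X^p.1 * Y^p.2) ∘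
        Finset.HasAntidiagonal.sigmaAntidiagonalEquivProd) ⟨N, q⟩) (((N+1 : ℕ) : ℝ) * (X+Y)^N) := by
    intro N
    have := hasSum_fintype (fun q : Finset.HasAntidiagonal.antidiagonal N =>
      ((fun p : ℕ × ℕ => ((p.1+p.2+1 : ℕ) : ℝ) * ((p.1+p.2).choose p.1) * X^p.1 * Y^p.2) ∘
        Finset.HasAntidiagonal.sigmaAntidiagonalEquivProd) ⟨N, q⟩)
    convert this using 1
    simp only [Function.comp, Finset.HasAntidiagonal.sigmaAntidiagonalEquivProd_apply]
    rw [Finset.sum_coe_sort (Finset.HasAntidiagonal.antidiagonal N) (fun p : ℕ × ℕ => ((p.1+p.2+1 : ℕ) : ℝ) * ((p.1+p.2).choose p.1) * X^p.1 * Y^p.2)]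
    rw [(Commute.all X Y).add_pow', Finset.mul_sum]
    apply Finset.sum_congr rfl
    intro p hp
    rw [Finset.HasAntidiagonal.mem_antidiagonal] at hp
    rw [hp, nsmul_eq_mul]; ring
  refine HasSum.sigma_of_hasSum h1 h2 ?_
  rw [summable_sigma_of_nonneg]
  · refine ⟨fun N => (h2 N).summable, ?_⟩
    convert h1.summable using 2 with N
    exact (h2 N).tsum_eq
  · intro p; simp only [Function.comp]; positivity

noncomputable def Fq (x y : ℝ) (q : ℕ × ℕ) (p : ℝ × ℝ) : ℝ :=
  ((q.1+q.2+1 : ℕ) : ℝ) * ((q.1+q.2).choose q.1) * (x * cos p.2 ^ 2 * (1 - p.1^2))^q.1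
    * (y * sin p.2 ^ 2 * (1 - p.1^2))^q.2

lemma Fq_integrable (x y : ℝ) (q : ℕ × ℕ) :
    Integrable (Fq x y q) (volume.restrict (Set.Ioo (-1:ℝ) 1 ×ˢ Set.Ioo (0:ℝ) π)) := by
  have : IntegrableOn (Fq x y q) (Set.Icc (-1:ℝ) 1 ×ˢ Set.Icc (0:ℝ) π) := by
    apply ContinuousOn.integrableOn_compact (isCompact_Icc.prod isCompact_Icc)
    unfold Fq
    fun_prop
  exact this.mono_set (Set.prod_mono Set.Ioo_subset_Icc_self Set.Ioo_subset_Icc_self)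

lemma Fq_integral (x y : ℝ) (q : ℕ × ℕ) :
    ∫ p in Set.Ioo (-1:ℝ) 1 ×ˢ Set.Ioo (0:ℝ) π, Fq x y q p =
      2 * π * (poch 2 (q.1 + q.2) * poch (1/2) q.1 * poch (1/2) q.2 *
      x ^ q.1 * y ^ q.2 /
    (poch (3/2) (q.1 + q.2) * Nat.factorial q.1 * Nat.factorial q.2)) := by
  have h := setIntegral_prod_mul (μ := (volume : Measure ℝ)) (ν := (volume : Measure ℝ))
    (fun t : ℝ => (1 - t^2)^(q.1+q.2)) (fun p : ℝ => cos p ^ (2*q.1) * sin p ^ (2*q.2))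
    (Set.Ioo (-1:ℝ) 1) (Set.Ioo (0:ℝ) π)
  rw [← integral_Ioc_eq_integral_Ioo, ← integral_Ioc_eq_integral_Ioo (x := (0:ℝ)),
    ← intervalIntegral.integral_of_le (by norm_num),
    ← intervalIntegral.integral_of_le pi_pos.le, int_t, int_phi, ← Measure.volume_eq_prod] at h
  have h2 : ∀ p, Fq x y q p = (((q.1+q.2+1 : ℕ) : ℝ) * ((q.1+q.2).choose q.1) * x^q.1*y^q.2) *
      ((1 - p.1^2)^(q.1+q.2) * (cos p.2 ^ (2*q.1) * sin p.2 ^ (2*q.2))) := by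
    intro p
    unfold Fq
    simp only [mul_pow, pow_add, pow_mul]
    ring
  simp_rw [h2]
  rw [integral_const_mul, h, poch_two, Nat.factorial_succ]
  have hc : ((q.1+q.2).choose q.1 : ℝ) * q.1.factorial * q.2.factorial = (q.1+q.2).factorial := by
    have := Nat.add_choose_mul_factorial_mul_factorial q.1 q.2
    rw [← Nat.choose_symm_add] at this
    exact_mod_cast this
  have hp := poch_pos' (3/2) (by norm_num) (q.1+q.2)
  rw [← hc]
  have : ((q.1+q.2).choose q.1 : ℝ) ≠ 0 := by
    have := Nat.choose_pos (Nat.le_add_right q.1 q.2)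
    positivity
  push_cast
  rw [← hc]
  field_simp

lemma series_int (x y : ℝ) (hx : 0 ≤ x) (hx1 : x < 1) (hy : 0 ≤ y) (hy1 : y < 1) :
    ∫ p in Set.Ioo (-1:ℝ) 1 ×ˢ Set.Ioo (0:ℝ) π,
      1 / (1 - (x * cos p.2 ^ 2 * (1 - p.1^2) + y * sin p.2 ^ 2 * (1 - p.1^2)))^2 =
    2 * π * appellF1 2 (1/2) (1/2) (3/2) x y := by
  set s := Set.Ioo (-1:ℝ) 1 ×ˢ Set.Ioo (0:ℝ) π with hs
  have hsm : MeasurableSet s := measurableSet_Ioo.prod measurableSet_Ioo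
  have hpt : ∀ p ∈ s, 0 ≤ 1 - p.1^2 ∧ x * cos p.2 ^ 2 * (1 - p.1^2) + y * sin p.2 ^ 2 * (1 - p.1^2)
      ≤ max x y := by
    rintro ⟨t, φ⟩ ⟨⟨h1, h2⟩, -⟩
    simp only at h1 h2 ⊢
    have h3 : 0 ≤ 1 - t^2 := by nlinarith
    refine ⟨h3, ?_⟩
    have h4 : x * cos φ ^ 2 + y * sin φ ^ 2 ≤ max x y := by
      have e := sin_sq_add_cos_sq φ
      have e1 := mul_le_mul_of_nonneg_right (le_max_left x y) (sq_nonneg (cos φ))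
      have e2 := mul_le_mul_of_nonneg_right (le_max_right x y) (sq_nonneg (sin φ))
      calc _ ≤ max x y * (sin φ ^ 2 + cos φ ^ 2) := by linarith
        _ = _ := by rw [e, mul_one]
    have h5 : 0 ≤ x * cos φ ^ 2 + y * sin φ ^ 2 := by positivity
    nlinarith [mul_nonneg h5 (sq_nonneg t)]
  have hM : max x y < 1 := max_lt hx1 hy1
  have hsum : ∀ p ∈ s, HasSum (fun q => Fq x y q p)
      (1 / (1 - (x * cos p.2 ^ 2 * (1 - p.1^2) + y * sin p.2 ^ 2 * (1 - p.1^2)))^2) := by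
    intro p hp
    obtain ⟨h1, h2⟩ := hpt p hp
    exact hasSum_pt _ _ (by positivity) (by positivity) (h2.trans_lt hM)
  have hnn : ∀ p ∈ s, ∀ q, 0 ≤ Fq x y q p := by
    intro p hp q
    obtain ⟨h1, h2⟩ := hpt p hp
    unfold Fq
    positivity
  have hfin : volume s ≠ ⊤ := by
    rw [hs, Measure.volume_eq_prod, Measure.prod_prod]
    simp [ENNReal.mul_eq_top]
  have hnorm : ∀ q, ∫ p in s, ‖Fq x y q p‖ = ∫ p in s, Fq x y q p := by
    intro q
    apply setIntegral_congr_fun hsm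
    intro p hp
    exact Real.norm_of_nonneg (hnn p hp q)
  have hS : Summable (fun q => ∫ p in s, ‖Fq x y q p‖) := by
    apply summable_of_sum_le (c := ∫ p in s, 1 / (1 - max x y)^2)
    · intro q; exact integral_nonneg (fun _ => norm_nonneg _)
    · intro u
      simp_rw [hnorm]
      rw [← integral_finsetSum _ (fun q _ => Fq_integrable x y q)]
      apply setIntegral_mono_on (integrable_finsetSum _ (fun q _ => Fq_integrable x y q))
        (integrableOn_const hfin) hsm
      intro p hp
      refine (sum_le_hasSum u (fun q _ => hnn p hp q) (hsum p hp)).trans ?_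
      have := (hpt p hp).2
      have h0 : 0 < 1 - max x y := by linarith
      gcongr
  have key := hasSum_integral_of_summable_integral_norm (fun q => Fq_integrable x y q) hS
  have e : ∫ p in s, (∑' q, Fq x y q p) = ∫ p in s,
      1 / (1 - (x * cos p.2 ^ 2 * (1 - p.1^2) + y * sin p.2 ^ 2 * (1 - p.1^2)))^2 := by
    apply setIntegral_congr_fun hsm
    intro p hp
    exact (hsum p hp).tsum_eq
  rw [← e, ← key.tsum_eq]
  rw [appellF1, ← tsum_mul_left]
  exact tsum_congr (fun q => Fq_integral x y q)

lemma sqrt_iff_pos' {x y : ℝ} (h : 0 < y) : sqrt x = y ↔ x = y ^ 2 := by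
  constructor
  · rintro rfl
    exact (Real.sq_sqrt (Real.sqrt_pos.1 h).le).symm
  · rintro rfl
    exact Real.sqrt_sq h.le

noncomputable def mkL (A B C D : ℝ) : ℝ × ℝ →L[ℝ] ℝ × ℝ :=
  (Matrix.toLin (.finTwoProd ℝ) (.finTwoProd ℝ) !![A, B; C, D]).toContinuousLinearMap

lemma mkL_det (A B C D : ℝ) : (mkL A B C D).det = A * D - B * C := by
  unfold mkL
  simp only [LinearMap.det_toContinuousLinearMap, LinearMap.det_toLin, Matrix.det_fin_two_of]

lemma hasFDerivAt_mkL {f g : ℝ × ℝ → ℝ} {A B C D : ℝ} {p : ℝ × ℝ}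
    (hf : HasFDerivAt f (A • ContinuousLinearMap.fst ℝ ℝ ℝ + B • ContinuousLinearMap.snd ℝ ℝ ℝ) p)
    (hg : HasFDerivAt g (C • ContinuousLinearMap.fst ℝ ℝ ℝ + D • ContinuousLinearMap.snd ℝ ℝ ℝ) p) :
    HasFDerivAt (fun q => (f q, g q)) (mkL A B C D) p := by
  unfold mkL
  rw [Matrix.toLin_finTwoProd_toContinuousLinearMap]
  exact hf.prodMk hg

lemma clm_ext2 {L M : ℝ × ℝ →L[ℝ] ℝ} (h1 : L (1,0) = M (1,0)) (h2 : L (0,1) = M (0,1)) : L = M := by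
  ext
  · simpa using h1
  · simpa using h2

-- Gauss-map change of variables
noncomputable def HH (a b c : ℝ) (p : ℝ × ℝ) : ℝ := sqrt (a^2*p.1^2 + b^2*p.2^2 + c^2)

lemma gauss_cov (a b c : ℝ) (ha : 0 < a) (hb : 0 < b) (hc : 0 < c) :
    ∫ p in {q : ℝ × ℝ | q.1 ^ 2 / a ^ 2 + q.2 ^ 2 / b ^ 2 < 1},
        Real.sqrt (1 +
          (c * p.1 / (a ^ 2 * Real.sqrt (1 - p.1 ^ 2 / a ^ 2 - p.2 ^ 2 / b ^ 2))) ^ 2 +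
          (c * p.2 / (b ^ 2 * Real.sqrt (1 - p.1 ^ 2 / a ^ 2 - p.2 ^ 2 / b ^ 2))) ^ 2)
      = ∫ p : ℝ × ℝ, a^2*b^2*c^2 / (a^2*p.1^2 + b^2*p.2^2 + c^2)^2 * sqrt (1 + p.1^2 + p.2^2) := by
  set F : ℝ × ℝ → ℝ × ℝ := fun p => (a^2 * p.1 / HH a b c p, b^2 * p.2 / HH a b c p) with hF
  have hpos : ∀ p : ℝ × ℝ, 0 < a^2*p.1^2 + b^2*p.2^2 + c^2 := fun p => by positivity
  have hH : ∀ p, 0 < HH a b c p := fun p => Real.sqrt_pos.2 (hpos p)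
  have hH2 : ∀ p, HH a b c p ^ 2 = a^2*p.1^2 + b^2*p.2^2 + c^2 := fun p => Real.sq_sqrt (hpos p).le
  have hFs : ∀ p, 1 - (F p).1 ^ 2 / a ^ 2 - (F p).2 ^ 2 / b ^ 2 = (c / HH a b c p)^2 := by
    intro p
    have := hH p
    have h2 := hH2 p
    simp only [hF]
    field_simp
    linear_combination h2
  have hFs' : ∀ p, sqrt (1 - (F p).1 ^ 2 / a ^ 2 - (F p).2 ^ 2 / b ^ 2) = c / HH a b c p := by
    intro p
    rw [hFs, Real.sqrt_sq (by have := hH p; positivity)]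
  have hG1 : ∀ p, c * (F p).1 / (a ^ 2 * sqrt (1 - (F p).1 ^ 2 / a ^ 2 - (F p).2 ^ 2 / b ^ 2)) = p.1 := by
    intro p
    rw [hFs']
    have := hH p
    simp only [hF]
    field_simp
  have hG2 : ∀ p, c * (F p).2 / (b ^ 2 * sqrt (1 - (F p).1 ^ 2 / a ^ 2 - (F p).2 ^ 2 / b ^ 2)) = p.2 := by
    intro p
    rw [hFs']
    have := hH p
    simp only [hF]
    field_simp
  have himg : F '' Set.univ = {q : ℝ × ℝ | q.1 ^ 2 / a ^ 2 + q.2 ^ 2 / b ^ 2 < 1} := by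
    ext q
    constructor
    · rintro ⟨p, -, rfl⟩
      have h1 := hFs p
      have h2 : 0 < (c / HH a b c p)^2 := by have := hH p; positivity
      show (F p).1 ^ 2 / a ^ 2 + (F p).2 ^ 2 / b ^ 2 < 1
      linarith
    · intro hq
      have hq' : 0 < 1 - q.1 ^ 2 / a ^ 2 - q.2 ^ 2 / b ^ 2 := by
        have : q.1 ^ 2 / a ^ 2 + q.2 ^ 2 / b ^ 2 < 1 := hq
        linarith
      set r := sqrt (1 - q.1 ^ 2 / a ^ 2 - q.2 ^ 2 / b ^ 2) with hr
      have hr0 : 0 < r := Real.sqrt_pos.2 hq'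
      have hr2 : r^2 = 1 - q.1 ^ 2 / a ^ 2 - q.2 ^ 2 / b ^ 2 := Real.sq_sqrt hq'.le
      refine ⟨(c * q.1 / (a^2 * r), c * q.2 / (b^2 * r)), trivial, ?_⟩
      have : HH a b c (c * q.1 / (a^2 * r), c * q.2 / (b^2 * r)) = c / r := by
        unfold HH
        rw [sqrt_iff_pos' (by positivity)]
        simp only
        field_simp at hr2 ⊢
        linear_combination hr2
      simp only [hF, this]
      ext
      · simp only; field_simp
      · simp only; field_simp
  have hinj : Set.InjOn F Set.univ := by
    intro p _ q _ h
    ext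
    · rw [← hG1 p, ← hG1 q, h]
    · rw [← hG2 p, ← hG2 q, h]
  have hder : ∀ p ∈ Set.univ, HasFDerivWithinAt F
      (mkL (a^2 * (HH a b c p ^ 2 - a^2 * p.1^2) / HH a b c p ^ 3)
        (-(a^2 * b^2 * p.1 * p.2) / HH a b c p ^ 3)
        (-(a^2 * b^2 * p.1 * p.2) / HH a b c p ^ 3)
        (b^2 * (HH a b c p ^ 2 - b^2 * p.2^2) / HH a b c p ^ 3)) Set.univ p := by
    intro p _
    apply HasFDerivAt.hasFDerivWithinAt
    have h0 := hH p
    have hd : HasFDerivAt (HH a b c) ((a^2 * p.1 / HH a b c p) • ContinuousLinearMap.fst ℝ ℝ ℝ +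
        (b^2 * p.2 / HH a b c p) • ContinuousLinearMap.snd ℝ ℝ ℝ) p := by
      have h1 : HasFDerivAt (fun q : ℝ × ℝ => a^2*q.1^2 + b^2*q.2^2 + c^2) _ p :=
        (((hasFDerivAt_fst (𝕜 := ℝ) (p := p)).pow 2 |>.const_mul (a^2)).add
        ((hasFDerivAt_snd (𝕜 := ℝ) (p := p)).pow 2 |>.const_mul (b^2))).add_const (c^2)
      refine (h1.sqrt (hpos p).ne').congr_fderiv ?_
      apply clm_ext2
      · simp
        unfold HH at h0 ⊢
        field_simp
      · simp
        unfold HH at h0 ⊢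
        field_simp
    have hi := (hasDerivAt_inv h0.ne').comp_hasFDerivAt p hd
    apply hasFDerivAt_mkL
    · have := ((hasFDerivAt_fst (𝕜 := ℝ) (p := p)).const_mul (a^2)).mul hi
      refine HasFDerivAt.congr_fderiv this ?_
      apply clm_ext2
      · simp
        field_simp
        ring
      · simp
        field_simp
    · have := ((hasFDerivAt_snd (𝕜 := ℝ) (p := p)).const_mul (b^2)).mul hi
      refine HasFDerivAt.congr_fderiv this ?_
      apply clm_ext2
      · simp
        field_simp
      · simp
        field_simp
        ring
  rw [← himg, integral_image_eq_integral_abs_det_fderiv_smul volume MeasurableSet.univ hder hinj,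
    setIntegral_univ]
  congr 1
  ext p
  rw [hG1, hG2, mkL_det, smul_eq_mul]
  congr 1
  have h0 := hH p
  have h2 := hH2 p
  rw [← h2, ← abs_of_pos (show 0 < a^2*b^2*c^2/(HH a b c p ^2)^2 by positivity)]
  congr 1
  field_simp
  linear_combination (HH a b c p ^ 2) * h2

lemma closed_open (a b : ℝ) (ha : 0 < a) (hb : 0 < b) :
    {q : ℝ × ℝ | q.1 ^ 2 / a ^ 2 + q.2 ^ 2 / b ^ 2 ≤ 1} =ᵐ[volume]
    {q : ℝ × ℝ | q.1 ^ 2 / a ^ 2 + q.2 ^ 2 / b ^ 2 < 1} := by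
  have hm : MeasurableSet {q : ℝ × ℝ | q.1 ^ 2 / a ^ 2 + q.2 ^ 2 / b ^ 2 = 1} :=
    (isClosed_eq (by fun_prop) (by fun_prop)).measurableSet
  have h0 : volume {q : ℝ × ℝ | q.1 ^ 2 / a ^ 2 + q.2 ^ 2 / b ^ 2 = 1} = 0 := by
    rw [Measure.volume_eq_prod, Measure.measure_prod_null hm]
    refine Filter.Eventually.of_forall (fun x => ?_)
    apply Set.Finite.measure_zero
    apply Set.Finite.subset (s := {b * sqrt (1 - x^2/a^2), -(b * sqrt (1 - x^2/a^2))}) (by simp)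
    intro y hy
    have hy : x ^ 2 / a ^ 2 + y ^ 2 / b ^ 2 = 1 := hy
    have h1 : 1 - x^2/a^2 = y^2/b^2 := by linarith
    have h2 : y^2 = (b * sqrt (1 - x^2/a^2))^2 := by
      rw [mul_pow, Real.sq_sqrt (by rw [h1]; positivity), h1]; field_simp
    simpa using sq_eq_sq_iff_eq_or_eq_neg.1 h2
  filter_upwards [compl_mem_ae_iff.2 h0] with q hq
  have hq : ¬ (q.1 ^ 2 / a ^ 2 + q.2 ^ 2 / b ^ 2 = 1) := hq
  apply propext
  exact ⟨fun h => lt_of_le_of_ne h hq, fun h => le_of_lt h⟩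

lemma cov2 (g : ℝ × ℝ → ℝ) :
    ∫ p, g p = ∫ p in Set.Ioo (-1:ℝ) 1 ×ˢ Set.Ioo (0:ℝ) π,
      1 / (sqrt (1 - p.1^2) ^ 3 * sin p.2 ^ 3) *
        g (p.1 / (sqrt (1 - p.1^2) * sin p.2), cos p.2 / sin p.2) := by
  set s := Set.Ioo (-1:ℝ) 1 ×ˢ Set.Ioo (0:ℝ) π with hs
  have hsm : MeasurableSet s := measurableSet_Ioo.prod measurableSet_Ioo
  set F : ℝ × ℝ → ℝ × ℝ := fun p => (p.1 / (sqrt (1 - p.1^2) * sin p.2), cos p.2 / sin p.2) with hF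
  have hpt : ∀ p ∈ s, 0 < 1 - p.1^2 ∧ 0 < sin p.2 := by
    rintro ⟨t, φ⟩ ⟨⟨h1, h2⟩, h3, h4⟩
    exact ⟨by simp only at *; nlinarith, sin_pos_of_pos_of_lt_pi h3 h4⟩
  have hcos : ∀ p ∈ s, p.2 = arccos ((F p).2 / sqrt (1 + (F p).2^2)) := by
    intro p hp
    obtain ⟨h1, h2⟩ := hpt p hp
    have : sqrt (1 + (F p).2^2) = 1 / sin p.2 := by
      rw [sqrt_iff_pos' (by positivity)]
      have := sin_sq_add_cos_sq p.2
      simp only [hF]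
      field_simp
      linear_combination this
    rw [this]
    simp only [hF]
    rw [show cos p.2 / sin p.2 / (1 / sin p.2) = cos p.2 by field_simp,
      arccos_cos hp.2.1.le hp.2.2.le]
  have ht : ∀ p ∈ s, p.1 = ((F p).1 * sin p.2) / sqrt (1 + ((F p).1 * sin p.2)^2) := by
    intro p hp
    obtain ⟨h1, h2⟩ := hpt p hp
    have h3 := Real.sqrt_pos.2 h1
    have h4 := Real.sq_sqrt h1.le
    have e : (F p).1 * sin p.2 = p.1 / sqrt (1 - p.1^2) := by
      simp only [hF]
      field_simp
    rw [e]
    have : sqrt (1 + (p.1 / sqrt (1 - p.1^2))^2) = 1 / sqrt (1 - p.1^2) := by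
      rw [sqrt_iff_pos' (by positivity)]
      rw [div_pow, div_pow, h4]
      field_simp
      ring
    rw [this]
    field_simp
  have hinj : Set.InjOn F s := by
    intro p hp q hq h
    have h2 : p.2 = q.2 := by rw [hcos p hp, hcos q hq, h]
    have h1 : p.1 = q.1 := by rw [ht p hp, ht q hq, h, h2]
    exact Prod.ext h1 h2
  have himg : F '' s = Set.univ := by
    refine Set.eq_univ_of_forall ?_
    rintro ⟨X, Y⟩
    have lt1 : ∀ z : ℝ, -1 < z / sqrt (1 + z^2) ∧ z / sqrt (1 + z^2) < 1 := by
      intro z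
      have h0 : 0 < sqrt (1 + z^2) := Real.sqrt_pos.2 (by positivity)
      rw [← abs_lt, abs_div, abs_of_pos h0, div_lt_one h0]
      apply Real.lt_sqrt_of_sq_lt
      rw [sq_abs]; linarith
    have h0 : 0 < sqrt (1 + Y^2) := Real.sqrt_pos.2 (by positivity)
    have h02 : sqrt (1 + Y^2) ^ 2 = 1 + Y^2 := Real.sq_sqrt (by positivity)
    set φ := arccos (Y / sqrt (1 + Y^2)) with hφ
    have c1 : cos φ = Y / sqrt (1 + Y^2) := cos_arccos (lt1 Y).1.le (lt1 Y).2.le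
    have s1 : sin φ = 1 / sqrt (1 + Y^2) := by
      rw [hφ, sin_arccos, sqrt_iff_pos' (by positivity), div_pow, div_pow, h02]
      field_simp
      ring
    set τ := X * sin φ with hτ
    have g0 : 0 < sqrt (1 + τ^2) := Real.sqrt_pos.2 (by positivity)
    have g02 : sqrt (1 + τ^2) ^ 2 = 1 + τ^2 := Real.sq_sqrt (by positivity)
    have g1 : sqrt (1 - (τ / sqrt (1 + τ^2))^2) = 1 / sqrt (1 + τ^2) := by
      rw [sqrt_iff_pos' (by positivity), div_pow, div_pow, g02]
      field_simp
      ring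
    have hsp : 0 < sin φ := by rw [s1]; positivity
    refine ⟨(τ / sqrt (1 + τ^2), φ), ⟨lt1 τ, ?_, ?_⟩, ?_⟩
    · exact arccos_pos.2 (lt1 Y).2
    · exact lt_of_le_of_ne (arccos_le_pi _) (fun h => (lt1 Y).1.not_ge (arccos_eq_pi.1 h))
    · simp only [hF]
      rw [g1]
      ext
      · simp only
        field_simp
        rw [hτ]; ring
      · simp only
        rw [c1, s1]
        field_simp
  have hder : ∀ p ∈ s, HasFDerivWithinAt F
      (mkL (1 / (sqrt (1 - p.1^2) ^ 3 * sin p.2))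
        (-(p.1 * cos p.2) / (sqrt (1 - p.1^2) * sin p.2 ^ 2))
        0 (-1 / sin p.2 ^ 2)) s p := by
    intro p hp
    apply HasFDerivAt.hasFDerivWithinAt
    obtain ⟨h1, h2⟩ := hpt p hp
    have h3 := Real.sqrt_pos.2 h1
    have h4 := Real.sq_sqrt h1.le
    have ds : HasFDerivAt (fun q : ℝ × ℝ => sin q.2) _ p :=
      (hasDerivAt_sin p.2).comp_hasFDerivAt p (hasFDerivAt_snd (𝕜 := ℝ) (p := p))
    have dc : HasFDerivAt (fun q : ℝ × ℝ => cos q.2) _ p :=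
      (hasDerivAt_cos p.2).comp_hasFDerivAt p (hasFDerivAt_snd (𝕜 := ℝ) (p := p))
    have dr : HasFDerivAt (fun q : ℝ × ℝ => sqrt (1 - q.1^2)) _ p :=
      (((hasFDerivAt_fst (𝕜 := ℝ) (p := p)).pow 2).const_sub 1).sqrt h1.ne'
    apply hasFDerivAt_mkL
    · have := (hasFDerivAt_fst (𝕜 := ℝ) (p := p)).mul ((hasDerivAt_inv (mul_pos h3 h2).ne').comp_hasFDerivAt p (dr.mul ds))
      refine HasFDerivAt.congr_fderiv this ?_
      apply clm_ext2
      · simp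
        field_simp
        linear_combination h4
      · simp
        field_simp
    · have := dc.mul ((hasDerivAt_inv h2.ne').comp_hasFDerivAt p ds)
      refine HasFDerivAt.congr_fderiv this ?_
      have e := sin_sq_add_cos_sq p.2
      apply clm_ext2
      · simp
      · simp
        field_simp
        linear_combination -e
  rw [← setIntegral_univ, ← himg,
    integral_image_eq_integral_abs_det_fderiv_smul volume hsm hder hinj]
  apply setIntegral_congr_fun hsm
  intro p hp
  obtain ⟨h1, h2⟩ := hpt p hp
  have h3 := Real.sqrt_pos.2 h1
  simp only
  rw [mkL_det, smul_eq_mul, ← abs_of_pos (show 0 < 1 / (sqrt (1 - p.1^2) ^ 3 * sin p.2 ^ 3) by positivity),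
    ← abs_neg]
  congr 2
  field_simp
  ring

/-- For `a ≥ b ≥ c > 0`, the surface area of the hemiellipsoid
`z = c√(1 − x²/a² − y²/b²)` equals
`(2πb²c²/a²) F₁(2; 1/2, 1/2; 3/2; 1 − b²/a², 1 − c²/a²)`. -/
theorem hemiellipsoid_surface_area (a b c : ℝ) (hab : a ≥ b) (hbc : b ≥ c)
    (hc : 0 < c) :
    ∫ p in {q : ℝ × ℝ | q.1 ^ 2 / a ^ 2 + q.2 ^ 2 / b ^ 2 ≤ 1},
        Real.sqrt (1 +
          (c * p.1 / (a ^ 2 * Real.sqrt (1 - p.1 ^ 2 / a ^ 2 - p.2 ^ 2 / b ^ 2))) ^ 2 +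
          (c * p.2 / (b ^ 2 * Real.sqrt (1 - p.1 ^ 2 / a ^ 2 - p.2 ^ 2 / b ^ 2))) ^ 2)
      = (2 * π * b ^ 2 * c ^ 2 / a ^ 2) *
          appellF1 2 (1 / 2) (1 / 2) (3 / 2) (1 - b ^ 2 / a ^ 2) (1 - c ^ 2 / a ^ 2) := by
  have hb : 0 < b := lt_of_lt_of_le hc hbc
  have ha : 0 < a := lt_of_lt_of_le hb hab
  rw [setIntegral_congr_set (closed_open a b ha hb), gauss_cov a b c ha hb hc, cov2]
  have hser := series_int (1 - b ^ 2 / a ^ 2) (1 - c ^ 2 / a ^ 2)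
    (by rw [sub_nonneg, div_le_one (by positivity)]; gcongr)
    (by have : 0 < b^2/a^2 := by positivity
        linarith)
    (by rw [sub_nonneg, div_le_one (by positivity)]; gcongr; linarith)
    (by have : 0 < c^2/a^2 := by positivity
        linarith)
  have e : (2 * π * b ^ 2 * c ^ 2 / a ^ 2) *
      appellF1 2 (1 / 2) (1 / 2) (3 / 2) (1 - b ^ 2 / a ^ 2) (1 - c ^ 2 / a ^ 2) =
      (b^2*c^2/a^2) * (2 * π *
      appellF1 2 (1 / 2) (1 / 2) (3 / 2) (1 - b ^ 2 / a ^ 2) (1 - c ^ 2 / a ^ 2)) := by ring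
  rw [e, ← hser, ← integral_const_mul]
  apply setIntegral_congr_fun (measurableSet_Ioo.prod measurableSet_Ioo)
  rintro ⟨t, φ⟩ ⟨⟨h1, h2⟩, h3, h4⟩
  simp only at h1 h2 h3 h4 ⊢
  have hs : 0 < sin φ := sin_pos_of_pos_of_lt_pi h3 h4
  have h5 : 0 < 1 - t^2 := by nlinarith
  have h6 := Real.sqrt_pos.2 h5
  have h7 := Real.sq_sqrt h5.le
  have sc := sin_sq_add_cos_sq φ
  set r := sqrt (1 - t^2) with hr
  have q1 : sqrt (1 + (t / (r * sin φ))^2 + (cos φ / sin φ)^2) = 1 / (r * sin φ) := by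
    rw [sqrt_iff_pos' (by positivity)]
    field_simp
    linear_combination h7 + r^2 * sc
  have q2 : a^2 * (t / (r * sin φ))^2 + b^2 * (cos φ / sin φ)^2 + c^2 =
      (a^2 * t^2 + r^2 * (b^2 * cos φ ^ 2 + c^2 * sin φ ^ 2)) / (r * sin φ)^2 := by
    field_simp
    ring
  have q3 : 1 - ((1 - b ^ 2 / a ^ 2) * cos φ ^ 2 * (1 - t^2) + (1 - c ^ 2 / a ^ 2) * sin φ ^ 2 * (1 - t^2))
      = (a^2 * t^2 + r^2 * (b^2 * cos φ ^ 2 + c^2 * sin φ ^ 2)) / a^2 := by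
    rw [h7]
    field_simp
    linear_combination -(a^2 * (1 - t^2)) * sc
  have hQ : 0 < a^2 * t^2 + r^2 * (b^2 * cos φ ^ 2 + c^2 * sin φ ^ 2) := by positivity
  rw [q1, q2, q3]
  field_simp
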